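/- arXiv:1310.0981 — 2 statements merged into one kernel-verified Lean document; each statement's English description precedes it below -/
import Mathlib

section
/- Let m ≥ 1 and α, α̃ ∈ ℂ. Let f, f̃ : ℝ × ℤ → ℂ be differentiable in the time variable; define g = ∏_{s=1}^{m−1} f(·,·+s) − α, G = ∏_{s=0}^{m} f(·,·+s) − α, g̃ = ∏_{s=1}^{m−1} f̃(·,·+s) − α̃, G̃ = ∏_{s=0}^{m} f̃(·,·+s) − α̃, and assume G and G̃ are nowhere zero. Suppose f and f̃ each satisfy the modified lattice equation ∂_t f(t,n) = f(t,n)·(∏_{s=1}^{m−1} g(t,n−s))/(∏_{s=0}^{m} G(t,n−s))·(g(t,n)·g(t,n−m)·(G(t,n) − G(t,n−m)) − G(t,n)·G(t,n−m)·(g(t,n) − g(t,n−m))) (with the corresponding tilded quantities for f̃). Define the residual R(t,n) := g̃(t,n)·f̃(t,n)·G(t,n) − f(t,n+m)·g(t,n)·G̃(t,n). If for some time t₀ the relation R(t₀,n) = 0 holds for all n ∈ ℤ, then ∂_t R(t₀,n) = 0 for all n ∈ ℤ. -/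
/-- Right-hand side of the discrete Sawada-Kotera lattice (with `m = k + 1`). -/
noncomputable def dSK (k : ℕ) (u : ℤ → ℂ) (n : ℤ) : ℂ :=
  u n ^ 2 * ((∏ s ∈ Finset.range k, u (n + s + 1)) * u (n + k + 1)
      - (∏ s ∈ Finset.range k, u (n - s - 1)) * u (n - k - 1))
    - u n * ((∏ s ∈ Finset.range k, u (n + s + 1)) - ∏ s ∈ Finset.range k, u (n - s - 1))

lemma prod_refl_aux (k : ℕ) (h : ℤ → ℂ) (n : ℤ) :
    ∏ s ∈ Finset.range k, h (n + k - s) = ∏ s ∈ Finset.range k, h (n + s + 1) := by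
  rw [← Finset.prod_range_reflect]
  apply Finset.prod_congr rfl
  intro s hs
  have := Finset.mem_range.1 hs
  congr 1
  omega

lemma prod_shift_aux (k : ℕ) (h : ℤ → ℂ) (n : ℤ) :
    h (n + 1) * ∏ s ∈ Finset.range k, h (n + 1 + s + 1)
      = (∏ s ∈ Finset.range k, h (n + s + 1)) * h (n + k + 1) := by
  rw [← Finset.prod_range_succ (fun s : ℕ => h (n + s + 1)), Finset.prod_range_succ', mul_comm]
  congr 1
  · apply Finset.prod_congr rfl
    intro s _
    congr 1
    push_cast
    ring
  · simp

lemma prod_shift_aux' (k : ℕ) (h : ℤ → ℂ) (n : ℤ) :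
    h n * ∏ s ∈ Finset.range k, h (n - s - 1)
      = (∏ s ∈ Finset.range k, h (n + 1 - s - 1)) * h (n - k) := by
  have e : ∀ s : ℕ, h (n + 1 - s - 1) = h (n - s) := fun s => by congr 1; ring
  simp only [e]
  rw [← Finset.prod_range_succ (fun s : ℕ => h (n - s)), Finset.prod_range_succ', mul_comm]
  congr 1
  · apply Finset.prod_congr rfl
    intro s _
    congr 1
    push_cast
    ring
  · simp

lemma prod_big_aux (k : ℕ) (h : ℤ → ℂ) (n : ℤ) :
    ∏ s ∈ Finset.range (k + 1 + 1), h (n + s)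
      = h n * (∏ s ∈ Finset.range k, h (n + s + 1)) * h (n + k + 1) := by
  rw [Finset.prod_range_succ, Finset.prod_range_succ']
  simp only [Nat.cast_add, Nat.cast_one, Nat.cast_zero, add_zero, ← add_assoc]
  ring

lemma prod_big_aux' (k : ℕ) (h : ℤ → ℂ) (n : ℤ) :
    ∏ s ∈ Finset.range (k + 1 + 1), h (n - s)
      = h n * (∏ s ∈ Finset.range k, h (n - s - 1)) * h (n - k - 1) := by
  rw [Finset.prod_range_succ, Finset.prod_range_succ']
  simp only [Nat.cast_add, Nat.cast_one, Nat.cast_zero, sub_zero, ← sub_sub]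
  ring

lemma hasDeriv_prod_aux (f : ℝ → ℤ → ℂ) (φ : ℤ → ℂ) (t : ℝ)
    (hf : ∀ n, HasDerivAt (fun τ => f τ n) (f t n * φ n) t) (n : ℤ) (k : ℕ) :
    HasDerivAt (fun τ => ∏ s ∈ Finset.range k, f τ (n + s + 1))
      ((∏ s ∈ Finset.range k, f t (n + s + 1)) * ∑ s ∈ Finset.range k, φ (n + s + 1)) t := by
  induction k with
  | zero => simpa using hasDerivAt_const t (1 : ℂ)
  | succ k ih =>
    simp only [Finset.prod_range_succ, Finset.sum_range_succ]
    refine (ih.mul (hf _)).congr_deriv ?_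
    ring

lemma alg_aux1 (α P Q r p q1 r1 p2 r2 ρ0 ρ1 Φ φ0 φ1 : ℂ)
    (h0 : r * (Q - α) = P - α) (h1 : r1 * (q1 - α) = p - α)
    (hS : α * Φ = ρ1 * r * (α ^ 2 - Q * p) - ρ0 * r * (α ^ 2 - Q * p2))
    (hφ0 : φ0 = ρ0 * ((p2 - α) * (1 - r) - (P - α) * (1 - r2)))
    (hφ1 : φ1 = ρ1 * ((P - α) * (1 - r1) - (p - α) * (1 - r))) :
    (φ1 * (P - α) + P * Φ) * (Q - α) - (P - α) * Q * (φ0 + Φ + φ1)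
      = r * (r * (ρ1 * r1 * q1 - ρ0 * r2 * Q) - (p * ρ1 - P * ρ0)) * (Q - α) ^ 2 := by
  obtain rfl : P = r * (Q - α) + α := by linear_combination -h0
  subst hφ0 hφ1
  linear_combination ((Q - α) * (1 - r)) * hS - r ^ 2 * ρ1 * (Q - α) ^ 2 * h1

lemma alg_aux2 (α P Q r p r1 p2 q2 r2 ρ0 ρ1 Φ φ0 φ1 : ℂ)
    (h0 : r * (Q - α) = P - α) (h2 : r2 * (q2 - α) = p2 - α)
    (hS : α * Φ = ρ1 * r * (α ^ 2 - Q * p) - ρ0 * r * (α ^ 2 - Q * p2))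
    (hφ0 : φ0 = ρ0 * ((p2 - α) * (1 - r) - (P - α) * (1 - r2)))
    (hφ1 : φ1 = ρ1 * ((P - α) * (1 - r1) - (p - α) * (1 - r))) :
    (φ0 * (P - α) + P * Φ) * (Q - α) - (P - α) * Q * (φ0 + Φ + φ1)
      = r * (r * (ρ1 * r1 * Q - ρ0 * r2 * q2) - (P * ρ1 - p2 * ρ0)) * (Q - α) ^ 2 := by
  obtain rfl : P = r * (Q - α) + α := by linear_combination -h0
  subst hφ0 hφ1
  linear_combination ((Q - α) * (1 - r)) * hS + r ^ 2 * ρ0 * (Q - α) ^ 2 * h2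

lemma miura_aux (k : ℕ) (α : ℂ) (f g G : ℝ → ℤ → ℂ)
    (hg : ∀ (t : ℝ) (n : ℤ), g t n = (∏ s ∈ Finset.range k, f t (n + s + 1)) - α)
    (hG : ∀ (t : ℝ) (n : ℤ), G t n = (∏ s ∈ Finset.range (k + 1 + 1), f t (n + s)) - α)
    (t : ℝ) (hG0 : ∀ n, G t n ≠ 0)
    (hf : ∀ n : ℤ,
      HasDerivAt (fun τ => f τ n)
        (f t n * (∏ s ∈ Finset.range k, g t (n - s - 1))
            / (∏ s ∈ Finset.range (k + 1 + 1), G t (n - s))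
          * (g t n * g t (n - k - 1) * (G t n - G t (n - k - 1))
            - G t n * G t (n - k - 1) * (g t n - g t (n - k - 1)))) t) (n : ℤ) :
    (∃ dg dG : ℂ, HasDerivAt (fun τ => g τ n) dg t ∧ HasDerivAt (fun τ => G τ n) dG t) ∧
    HasDerivAt (fun τ => f τ (n + k + 1) * g τ n / G τ n)
      (dSK k (fun j => f t (j + k + 1) * g t j / G t j) n) t ∧
    HasDerivAt (fun τ => g τ n * f τ n / G τ n)
      (dSK k (fun j => g t j * f t j / G t j) n) t := by
  obtain ⟨r, hr⟩ : ∃ r : ℤ → ℂ, ∀ j, r j = g t j / G t j := ⟨_, fun _ => rfl⟩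
  obtain ⟨P, hP⟩ : ∃ P : ℤ → ℂ, ∀ j, P j = ∏ s ∈ Finset.range k, f t (j + s + 1) :=
    ⟨_, fun _ => rfl⟩
  obtain ⟨ρ, hρ⟩ : ∃ ρ : ℤ → ℂ, ∀ j, ρ j = ∏ s ∈ Finset.range k, r (j - s - 1) :=
    ⟨_, fun _ => rfl⟩
  obtain ⟨φ, hφ⟩ : ∃ φ : ℤ → ℂ, ∀ j, φ j =
    ρ j * (g t (j - k - 1) * (1 - r j) - g t j * (1 - r (j - k - 1))) := ⟨_, fun _ => rfl⟩
  have hrG : ∀ j, r j * G t j = g t j := fun j => by rw [hr, div_mul_cancel₀ _ (hG0 j)]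
  have hgP : ∀ j, g t j = P j - α := fun j => by rw [hg, hP]
  have hGP : ∀ j, G t j = f t j * P j * f t (j + k + 1) - α := fun j => by
    rw [hG, prod_big_aux, hP]
  have hd : ∀ j, HasDerivAt (fun τ => f τ j) (f t j * φ j) t := by
    intro j
    refine (hf j).congr_deriv ?_
    rw [prod_big_aux', hφ, hρ]
    simp only [hr, Finset.prod_div_distrib]
    have h1 := hG0 j
    have h2 := hG0 (j - k - 1)
    have h3 : ∏ s ∈ Finset.range k, G t (j - s - 1) ≠ 0 :=
      Finset.prod_ne_zero_iff.2 fun s _ => hG0 _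
    field_simp
    ring
  -- telescoping
  obtain ⟨T, hT⟩ : ∃ T : ℤ → ℂ, ∀ j, T j = ρ j * r (j - k - 1) *
    (α ^ 2 - f t (j - k - 1) * P (j - k - 1) * f t j * P j) := ⟨_, fun _ => rfl⟩
  have hPs : ∀ j, f t (j + 1) * P (j + 1) = P j * f t (j + k + 1) := fun j => by
    rw [hP, hP, prod_shift_aux]
  have hρs : ∀ j, r j * ρ j = ρ (j + 1) * r (j - k) := fun j => by
    rw [hρ, hρ, prod_shift_aux']
  have hT' : ∀ j, T (j + 1) = ρ j * r j *
      (α ^ 2 - f t j * P j * f t (j + k + 1) * P (j - k - 1)) := fun j => by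
    rw [hT]
    have e1 : j + 1 - k - 1 = j - k := by ring
    have h1 := hPs (j - k - 1)
    have e2 : j - k - 1 + 1 = j - k := by ring
    have e3 : j - k - 1 + k + 1 = j := by ring
    rw [e2, e3] at h1
    rw [e1, ← hρs, h1]
    linear_combination (-r j * ρ j * P (j - k - 1) * f t j) * hPs j
  have hαφ : ∀ j, α * φ j = T (j + 1) - T j := fun j => by
    rw [hT', hT, hφ, hgP, hgP]
    have h1 := hrG j
    have h2 := hrG (j - k - 1)
    rw [hgP, hGP] at h1 h2
    have e3 : j - k - 1 + k + 1 = j := by ring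
    rw [e3] at h2
    linear_combination (ρ j * P (j - k - 1)) * h1 - (ρ j * P j) * h2
  have hsum : ∀ l : ℕ, α * ∑ s ∈ Finset.range l, φ (n + s + 1) = T (n + l + 1) - T (n + 1) := by
    intro l
    induction l with
    | zero => simp
    | succ l ih =>
      rw [Finset.sum_range_succ, mul_add, ih, hαφ]
      push_cast
      rw [← add_assoc n]
      ring
  obtain ⟨Φ, hΦ⟩ : ∃ Φ : ℂ, Φ = ∑ s ∈ Finset.range k, φ (n + s + 1) := ⟨_, rfl⟩
  have hS := hsum k
  rw [← hΦ, hT' n, hT (n + k + 1)] at hS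
  have e4 : n + k + 1 - k - 1 = n := by ring
  rw [e4] at hS
  have hφ1 := hφ (n + k + 1)
  rw [e4] at hφ1
  have hφ0 := hφ n
  have dP := hasDeriv_prod_aux f φ t hd n k
  rw [← hΦ, ← hP] at dP
  have dg : HasDerivAt (fun τ => g τ n) (P n * Φ) t := by
    simp only [hg]
    exact dP.sub_const α
  have dG : HasDerivAt (fun τ => G τ n)
      (f t n * P n * f t (n + k + 1) * (φ n + Φ + φ (n + k + 1))) t := by
    simp only [hG, prod_big_aux]
    refine ((((hd n).mul dP).mul (hd (n + k + 1))).sub_const α).congr_deriv ?_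
    simp only [hP, Pi.mul_apply]
    ring
  have e5 : n - k - 1 + k + 1 = n := by ring
  have h0 := hrG n
  have h1 := hrG (n + k + 1)
  have h2 := hrG (n - k - 1)
  have hG00 := hG0 n
  -- products
  have q1 : ∏ s ∈ Finset.range k, r (n + s + 1) = ρ (n + k + 1) := by
    rw [hρ, ← prod_refl_aux]
    apply Finset.prod_congr rfl
    intro s _
    congr 1
    ring
  have q2 : ∏ s ∈ Finset.range k, r (n - s - 1) = ρ n := (hρ n).symm
  have q3 : ∏ s ∈ Finset.range k, f t (n + s + 1 + k + 1) = P (n + k + 1) := by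
    rw [hP]
    apply Finset.prod_congr rfl
    intro s _
    congr 1
    ring
  have q4 : ∏ s ∈ Finset.range k, f t (n - s - 1 + k + 1) = P n := by
    rw [hP, ← prod_refl_aux]
    apply Finset.prod_congr rfl
    intro s _
    congr 1
    ring
  have q5 : ∏ s ∈ Finset.range k, f t (n + s + 1) = P n := (hP n).symm
  have q6 : ∏ s ∈ Finset.range k, f t (n - s - 1) = P (n - k - 1) := by
    rw [hP, ← prod_refl_aux]
    apply Finset.prod_congr rfl
    intro s _
    congr 1
    ring
  have hr0 : g t n = r n * G t n := h0.symm
  refine ⟨⟨_, _, dg, dG⟩, ?_, ?_⟩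
  · refine (((hd (n + k + 1)).mul dg).div dG (hG0 n)).congr_deriv ?_
    simp only [dSK, mul_div_assoc, ← hr, Finset.prod_mul_distrib, q1, q2, q3, q4, e5]
    simp only [Pi.mul_apply]
    rw [div_eq_iff (pow_ne_zero 2 hG00)]
    rw [hgP, hGP] at h0 h1 h2
    rw [e5] at h2
    simp only [hgP, hGP] at hφ0 hφ1 ⊢
    have key := alg_aux1 α (P n) (f t n * P n * f t (n + k + 1)) (r n) (P (n + k + 1))
      _ _ (P (n - k - 1)) (r (n - k - 1)) (ρ n) (ρ (n + k + 1)) Φ (φ n)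
      (φ (n + k + 1)) h0 h1 (by linear_combination hS) hφ0 hφ1
    linear_combination f t (n + k + 1) * key
  · refine ((dg.mul (hd n)).div dG (hG0 n)).congr_deriv ?_
    have hgf : ∀ j, g t j * f t j / G t j = f t j * r j := fun j => by rw [hr]; ring
    simp only [dSK, hgf, Finset.prod_mul_distrib, q1, q2, q5, q6]
    simp only [Pi.mul_apply]
    rw [div_eq_iff (pow_ne_zero 2 hG00)]
    rw [hgP, hGP] at h0 h1 h2
    rw [e5] at h2
    simp only [hgP, hGP] at hφ0 hφ1 ⊢
    have key := alg_aux2 α (P n) (f t n * P n * f t (n + k + 1)) (r n) (P (n + k + 1))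
      (r (n + k + 1)) (P (n - k - 1)) _ (r (n - k - 1)) (ρ n) (ρ (n + k + 1)) Φ (φ n)
      (φ (n + k + 1)) h0 h2 (by linear_combination hS) hφ0 hφ1
    linear_combination f t n * key

/-- The denominator-cleared Bäcklund relation `g̃ f̃ G = f_m g G̃` for the modified
discretization of the Sawada–Kotera equation: differentiating it in virtue of the two
lattice flows yields a relation which holds identically in virtue of the relation
itself. -/
theorem backlund_modified_dSK
    (m : ℕ) (hm : 1 ≤ m) (α α' : ℂ)
    (f f' : ℝ → ℤ → ℂ)
    (g G g' G' : ℝ → ℤ → ℂ)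
    (hg : ∀ (t : ℝ) (n : ℤ),
      g t n = (∏ s ∈ Finset.range (m - 1), f t (n + s + 1)) - α)
    (hG : ∀ (t : ℝ) (n : ℤ),
      G t n = (∏ s ∈ Finset.range (m + 1), f t (n + s)) - α)
    (hg' : ∀ (t : ℝ) (n : ℤ),
      g' t n = (∏ s ∈ Finset.range (m - 1), f' t (n + s + 1)) - α')
    (hG' : ∀ (t : ℝ) (n : ℤ),
      G' t n = (∏ s ∈ Finset.range (m + 1), f' t (n + s)) - α')
    (hG0 : ∀ (t : ℝ) (n : ℤ), G t n ≠ 0)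
    (hG'0 : ∀ (t : ℝ) (n : ℤ), G' t n ≠ 0)
    (hf : ∀ (t : ℝ) (n : ℤ),
      HasDerivAt (fun τ => f τ n)
        (f t n * (∏ s ∈ Finset.range (m - 1), g t (n - s - 1))
            / (∏ s ∈ Finset.range (m + 1), G t (n - s))
          * (g t n * g t (n - m) * (G t n - G t (n - m))
            - G t n * G t (n - m) * (g t n - g t (n - m)))) t)
    (hf' : ∀ (t : ℝ) (n : ℤ),
      HasDerivAt (fun τ => f' τ n)
        (f' t n * (∏ s ∈ Finset.range (m - 1), g' t (n - s - 1))
            / (∏ s ∈ Finset.range (m + 1), G' t (n - s))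
          * (g' t n * g' t (n - m) * (G' t n - G' t (n - m))
            - G' t n * G' t (n - m) * (g' t n - g' t (n - m)))) t)
    (R : ℝ → ℤ → ℂ)
    (hR : ∀ (t : ℝ) (n : ℤ),
      R t n = g' t n * f' t n * G t n - f t (n + m) * g t n * G' t n)
    (t₀ : ℝ) (hR0 : ∀ n : ℤ, R t₀ n = 0) :
    ∀ n : ℤ, deriv (fun t => R t n) t₀ = 0 := by
  intro n
  obtain ⟨k, rfl⟩ : ∃ k, m = k + 1 := ⟨m - 1, by omega⟩
  simp only [Nat.add_sub_cancel, Nat.cast_add, Nat.cast_one, ← add_assoc, ← sub_sub] at *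
  obtain ⟨⟨_, dG, -, hdG⟩, hu, -⟩ := miura_aux k α f g G hg hG t₀ (hG0 t₀) (hf t₀) n
  obtain ⟨⟨_, dG', -, hdG'⟩, -, hv⟩ := miura_aux k α' f' g' G' hg' hG' t₀ (hG'0 t₀) (hf' t₀) n
  have huv : (fun j => g' t₀ j * f' t₀ j / G' t₀ j)
      = fun j => f t₀ (j + k + 1) * g t₀ j / G t₀ j := by
    funext j
    have h := hR0 j
    rw [hR] at h
    rw [div_eq_div_iff (hG'0 _ _) (hG0 _ _)]
    linear_combination h
  have hRe : (fun t => R t n) = fun t => (g' t n * f' t n / G' t n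
      - f t (n + k + 1) * g t n / G t n) * (G t n * G' t n) := by
    funext t
    rw [hR]
    have := hG0 t n
    have := hG'0 t n
    field_simp
  rw [hRe]
  refine (((hv.sub hu).mul (hdG.mul hdG')).congr_deriv ?_).deriv
  have hn := congrFun huv n
  simp only [Pi.sub_apply, huv, hn]
  ring
end

section
/- Let m ≥ 1 and let a, b ∈ ℂ with a ≠ b. For a tuple f = (f_0, f_1, …, f_m) ∈ ℂ^{m+1} and parameter c, set g = ∏_{s=1}^{m−1} f_s − c and G = ∏_{s=0}^{m} f_s − c, and let A[f, c, λ] be the (m+1)×(m+1) matrix with rows k = 1,…,m having diagonal entry −f_{k−1} and superdiagonal entry 1, and last row (λ, −λG/(g f_0), 0, …, 0, G/(g f_0) − f_m); let B[f, c, λ] be the (m+1)×(m+1) matrix with rows k = 1,…,m having diagonal entry 1 and superdiagonal entry −f_{k−1}, and last row (−λ f_m, λG/g, 0, …, 0, 1 − G/g); and let F[f, c, λ] := B[f, c, λ]^{−1}·A[f, c, λ] whenever B[f, c, λ] is invertible. Given tuples x (with parameter a) and y (with parameter b) whose components x_0,…,x_{m−1}, y_0,…,y_{m−1} are nonzero,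 define P_s = a·∏_{r=0}^{m−1} y_r − b·∏_{r=0}^{m−1} x_r + Σ_{r=0}^{m−1} γ_{r,s}·(x_r − y_r)·(∏_{t=0}^{r−1} x_t)·(∏_{t=0}^{r−1} y_t) for s = 0,…,m, where γ_{r,s} = 1 if s ≤ r and γ_{r,s} = a·b if r < s, and assume P_s ≠ 0 for all s. Define x'_s = P_{s+1}/(y_s·P_s) and y'_s = P'_{s+1}/(x_s·P'_s) for s = 0,…,m−1, where P'_s is obtained from P_s by interchanging the roles of (x, a) and (y, b), and let x'_m, y'_m ∈ ℂ be arbitrary. Then, whenever all the matrices B involved are invertible and all quantities are defined, the refactorization identity F[y', b, λ]·F[x, a, λ] = F[x', a, λ]·F[y, b, λ] holds for every λ ≠ 0. -/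
/-- The first-order matrix `A[f, c, λ]` of the Darboux transformation for the
discretization of the Sawada–Kotera equation. -/
noncomputable def dSKA (m : ℕ) (f : ℕ → ℂ) (c lam : ℂ) :
    Matrix (Fin (m + 1)) (Fin (m + 1)) ℂ :=
  Matrix.of fun k l =>
    if (k : ℕ) < m then
      (if l = k then -f (k : ℕ) else if (l : ℕ) = (k : ℕ) + 1 then 1 else 0)
    else
      (if (l : ℕ) = 0 then lam else 0)
      + (if (l : ℕ) = 1 then
          -lam * ((∏ s ∈ Finset.range (m + 1), f s) - c)
            / ((((∏ s ∈ Finset.range (m - 1), f (s + 1)) - c)) * f 0)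
         else 0)
      + (if (l : ℕ) = m then
          ((∏ s ∈ Finset.range (m + 1), f s) - c)
            / ((((∏ s ∈ Finset.range (m - 1), f (s + 1)) - c)) * f 0) - f m
         else 0)

/-- The first-order matrix `B[f, c, λ]` of the Darboux transformation for the
discretization of the Sawada–Kotera equation. -/
noncomputable def dSKB (m : ℕ) (f : ℕ → ℂ) (c lam : ℂ) :
    Matrix (Fin (m + 1)) (Fin (m + 1)) ℂ :=
  Matrix.of fun k l =>
    if (k : ℕ) < m then
      (if l = k then 1 else if (l : ℕ) = (k : ℕ) + 1 then -f (k : ℕ) else 0)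
    else
      (if (l : ℕ) = 0 then -lam * f m else 0)
      + (if (l : ℕ) = 1 then
          lam * ((∏ s ∈ Finset.range (m + 1), f s) - c)
            / ((∏ s ∈ Finset.range (m - 1), f (s + 1)) - c)
         else 0)
      + (if (l : ℕ) = m then
          1 - ((∏ s ∈ Finset.range (m + 1), f s) - c)
            / ((∏ s ∈ Finset.range (m - 1), f (s + 1)) - c)
         else 0)

/-- The Darboux matrix `F[f, c, λ] = B[f, c, λ]⁻¹ A[f, c, λ]`. -/
noncomputable def dSKF (m : ℕ) (f : ℕ → ℂ) (c lam : ℂ) :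
    Matrix (Fin (m + 1)) (Fin (m + 1)) ℂ :=
  (dSKB m f c lam)⁻¹ * dSKA m f c lam

/-- The polynomial `P_s` of the nonlinear superposition for the discretization of the
Sawada–Kotera equation. -/
noncomputable def dSKP (m : ℕ) (a b : ℂ) (x y : ℕ → ℂ) (s : ℕ) : ℂ :=
  a * (∏ r ∈ Finset.range m, y r) - b * (∏ r ∈ Finset.range m, x r)
    + ∑ r ∈ Finset.range m,
        (if s ≤ r then 1 else a * b) * (x r - y r)
          * (∏ t ∈ Finset.range r, x t) * ∏ t ∈ Finset.range r, y t


theorem dSK_sum_ite (N : ℕ) (v : Fin N → ℂ) (j : ℕ) (hj : j < N) (c : ℂ) :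
    ∑ l : Fin N, (if (l : ℕ) = j then c else 0) * v l = c * v ⟨j, hj⟩ := by
  rw [Finset.sum_eq_single (⟨j, hj⟩ : Fin N)]
  · simp
  · intro l _ hl
    have : (l : ℕ) ≠ j := fun h => hl (Fin.ext h)
    simp [this]
  · simp

theorem dSK_sum_two (m : ℕ) (v : Fin (m + 1) → ℂ) (k : ℕ) (hk : k < m) (c d : ℂ) :
    ∑ l : Fin (m + 1), (if l = (⟨k, by omega⟩ : Fin (m + 1)) then c
      else if (l : ℕ) = k + 1 then d else 0) * v l
      = c * v ⟨k, by omega⟩ + d * v ⟨k + 1, by omega⟩ := by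
  rw [← dSK_sum_ite (m + 1) v k (by omega) c, ← dSK_sum_ite (m + 1) v (k + 1) (by omega) d,
    ← Finset.sum_add_distrib]
  refine Finset.sum_congr rfl fun l _ => ?_
  rw [← add_mul]
  congr 1
  by_cases h : (l : ℕ) = k
  · have h1 : l = (⟨k, by omega⟩ : Fin (m + 1)) := Fin.ext h
    rw [if_pos h1, if_pos h, if_neg (by omega), add_zero]
  · have h1 : l ≠ (⟨k, by omega⟩ : Fin (m + 1)) := fun e => h (by rw [e])
    simp [h, h1]

theorem dSK_sum_three (m : ℕ) (hm : 1 ≤ m) (v : Fin (m + 1) → ℂ) (c d e : ℂ) :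
    ∑ l : Fin (m + 1), ((if (l : ℕ) = 0 then c else 0) + (if (l : ℕ) = 1 then d else 0)
      + (if (l : ℕ) = m then e else 0)) * v l
      = c * v ⟨0, by omega⟩ + d * v ⟨1, by omega⟩ + e * v ⟨m, by omega⟩ := by
  simp only [add_mul, Finset.sum_add_distrib]
  rw [dSK_sum_ite, dSK_sum_ite, dSK_sum_ite]

theorem dSKA_row (m : ℕ) (f : ℕ → ℂ) (c lam : ℂ) (v : Fin (m + 1) → ℂ) (k : ℕ) (hk : k < m) :
    (dSKA m f c lam).mulVec v ⟨k, by omega⟩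
      = -f k * v ⟨k, by omega⟩ + 1 * v ⟨k + 1, by omega⟩ := by
  rw [← dSK_sum_two m v k hk]
  simp only [Matrix.mulVec, dotProduct, dSKA, Matrix.of_apply, hk, if_true]

theorem dSKB_row (m : ℕ) (f : ℕ → ℂ) (c lam : ℂ) (v : Fin (m + 1) → ℂ) (k : ℕ) (hk : k < m) :
    (dSKB m f c lam).mulVec v ⟨k, by omega⟩
      = 1 * v ⟨k, by omega⟩ + -f k * v ⟨k + 1, by omega⟩ := by
  rw [← dSK_sum_two m v k hk]
  simp only [Matrix.mulVec, dotProduct, dSKB, Matrix.of_apply, hk, if_true]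

theorem dSKA_last (m : ℕ) (hm : 1 ≤ m) (f : ℕ → ℂ) (c lam : ℂ) (v : Fin (m + 1) → ℂ) :
    (dSKA m f c lam).mulVec v ⟨m, by omega⟩
      = lam * v ⟨0, by omega⟩ + (-lam * ((∏ s ∈ Finset.range (m + 1), f s) - c)
            / ((((∏ s ∈ Finset.range (m - 1), f (s + 1)) - c)) * f 0)) * v ⟨1, by omega⟩
        + (((∏ s ∈ Finset.range (m + 1), f s) - c)
            / ((((∏ s ∈ Finset.range (m - 1), f (s + 1)) - c)) * f 0) - f m)
          * v ⟨m, by omega⟩ := by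
  rw [← dSK_sum_three m hm v]
  simp only [Matrix.mulVec, dotProduct, dSKA, Matrix.of_apply, lt_irrefl, if_false]

theorem dSKB_last (m : ℕ) (hm : 1 ≤ m) (f : ℕ → ℂ) (c lam : ℂ) (v : Fin (m + 1) → ℂ) :
    (dSKB m f c lam).mulVec v ⟨m, by omega⟩
      = -lam * f m * v ⟨0, by omega⟩ + (lam * ((∏ s ∈ Finset.range (m + 1), f s) - c)
            / ((∏ s ∈ Finset.range (m - 1), f (s + 1)) - c)) * v ⟨1, by omega⟩
        + (1 - ((∏ s ∈ Finset.range (m + 1), f s) - c)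
            / ((∏ s ∈ Finset.range (m - 1), f (s + 1)) - c)) * v ⟨m, by omega⟩ := by
  rw [← dSK_sum_three m hm v]
  simp only [Matrix.mulVec, dotProduct, dSKB, Matrix.of_apply, lt_irrefl, if_false]

/-- The scalar form of the relation `ψ = F φ`; it does not involve `f m`. -/
def dSKRel (m : ℕ) (f : ℕ → ℂ) (c lam : ℂ) (p q : Fin (m + 1) → ℂ) : Prop :=
  (∀ k, ∀ hk : k < m, p ⟨k + 1, by omega⟩ - q ⟨k, by omega⟩
      = f k * (p ⟨k, by omega⟩ - q ⟨k + 1, by omega⟩)) ∧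
  (∏ s ∈ Finset.range m, f s) * (q ⟨m, by omega⟩ - lam * p ⟨0, by omega⟩)
      = c * (lam * q ⟨0, by omega⟩ - p ⟨m, by omega⟩)

theorem dSK_prods (m : ℕ) (hm : 1 ≤ m) (f : ℕ → ℂ) :
    (∏ s ∈ Finset.range m, f s) = (∏ s ∈ Finset.range (m - 1), f (s + 1)) * f 0 ∧
    (∏ s ∈ Finset.range (m + 1), f s)
      = (∏ s ∈ Finset.range (m - 1), f (s + 1)) * f 0 * f m := by
  obtain ⟨n, rfl⟩ : ∃ n, m = n + 1 := ⟨m - 1, by omega⟩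
  have h : (∏ s ∈ Finset.range (n + 1), f s) = (∏ s ∈ Finset.range n, f (s + 1)) * f 0 :=
    Finset.prod_range_succ' f n
  exact ⟨h, by rw [Finset.prod_range_succ, h]; rfl⟩

theorem dSK_ne (m : ℕ) (hm : 1 ≤ m) (f : ℕ → ℂ) (c lam : ℂ) (hf : f 0 ≠ 0)
    (hg : (∏ s ∈ Finset.range (m - 1), f (s + 1)) - c ≠ 0)
    (hB : IsUnit (dSKB m f c lam).det) : 1 - f 0 * f m ≠ 0 := by
  intro h
  obtain ⟨-, h2⟩ := dSK_prods m hm f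
  set e : Fin (m + 1) → ℂ := fun l => if (l : ℕ) = m then 1 else 0 with he
  set v := (dSKB m f c lam)⁻¹.mulVec e with hv
  have hBv : (dSKB m f c lam).mulVec v = e := by
    rw [hv, Matrix.mulVec_mulVec, Matrix.mul_nonsing_inv _ hB, Matrix.one_mulVec]
  have r0 := dSKB_row m f c lam v 0 (by omega)
  have rm := dSKB_last m hm f c lam v
  rw [hBv] at r0 rm
  have hG : (∏ s ∈ Finset.range (m + 1), f s) = ∏ s ∈ Finset.range (m - 1), f (s + 1) := by
    rw [h2]
    linear_combination -(∏ s ∈ Finset.range (m - 1), f (s + 1)) * h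
  have e0 : e ⟨0, by omega⟩ = 0 := by
    have : (0 : ℕ) ≠ m := by omega
    simp [he, this]
  have em : e ⟨m, by omega⟩ = 1 := by simp [he]
  rw [hG, mul_div_assoc, div_self hg, em] at rm
  rw [e0] at r0
  simp only [zero_add] at r0
  have : f 0 * 1 = 0 := by
    linear_combination f 0 * rm + lam * v ⟨0, by omega⟩ * h + lam * r0
  simp [hf] at this

theorem dSK_eq_iff (m : ℕ) (hm : 1 ≤ m) (f : ℕ → ℂ) (c lam : ℂ) (hf : f 0 ≠ 0)
    (hg : (∏ s ∈ Finset.range (m - 1), f (s + 1)) - c ≠ 0)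
    (hB : IsUnit (dSKB m f c lam).det) (p q : Fin (m + 1) → ℂ) :
    q = (dSKF m f c lam).mulVec p ↔ dSKRel m f c lam p q := by
  have h1 := dSK_ne m hm f c lam hf hg hB
  obtain ⟨hp1, hp2⟩ := dSK_prods m hm f
  have key : q = (dSKF m f c lam).mulVec p ↔
      (dSKB m f c lam).mulVec q = (dSKA m f c lam).mulVec p := by
    constructor
    · rintro rfl
      rw [dSKF, Matrix.mulVec_mulVec, ← Matrix.mul_assoc, Matrix.mul_nonsing_inv _ hB,
        Matrix.one_mul]
    · intro h
      rw [dSKF, ← Matrix.mulVec_mulVec, ← h, Matrix.mulVec_mulVec, Matrix.nonsing_inv_mul _ hB,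
        Matrix.one_mulVec]
  rw [key]
  have hrow : ∀ k, ∀ hk : k < m,
      ((dSKB m f c lam).mulVec q ⟨k, by omega⟩ = (dSKA m f c lam).mulVec p ⟨k, by omega⟩ ↔
      p ⟨k + 1, by omega⟩ - q ⟨k, by omega⟩
        = f k * (p ⟨k, by omega⟩ - q ⟨k + 1, by omega⟩)) := by
    intro k hk
    rw [dSKB_row m f c lam q k hk, dSKA_row m f c lam p k hk]
    constructor <;> intro h <;> linear_combination -h
  have hlast : p ⟨0 + 1, by omega⟩ - q ⟨0, by omega⟩
        = f 0 * (p ⟨0, by omega⟩ - q ⟨0 + 1, by omega⟩) →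
      ((dSKB m f c lam).mulVec q ⟨m, by omega⟩ = (dSKA m f c lam).mulVec p ⟨m, by omega⟩ ↔
      (∏ s ∈ Finset.range m, f s) * (q ⟨m, by omega⟩ - lam * p ⟨0, by omega⟩)
      = c * (lam * q ⟨0, by omega⟩ - p ⟨m, by omega⟩)) := by
    intro r0
    simp only [zero_add] at r0
    rw [dSKB_last m hm, dSKA_last m hm, hp1, hp2]
    generalize (∏ s ∈ Finset.range (m - 1), f (s + 1)) = W at *
    obtain ⟨g, rfl⟩ : ∃ g, W = g + c := ⟨W - c, by ring⟩
    rw [add_sub_cancel_right] at *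
    have hgf : g * f 0 ≠ 0 := mul_ne_zero hg hf
    rw [← sub_eq_zero, ← sub_eq_zero (a := (g + c) * f 0 * _)]
    rw [← mul_right_inj' hgf, ← mul_right_inj' h1 (b := _ - c * _), mul_zero, mul_zero]
    refine Eq.congr_left ?_
    field_simp
    linear_combination lam * ((g + c) * f 0 * f m - c) * r0
  constructor
  · intro h
    have hr := fun k hk => (hrow k hk).1 (congrFun h _)
    exact ⟨hr, (hlast (hr 0 (by omega))).1 (congrFun h _)⟩
  · rintro ⟨hr, hl⟩
    funext ⟨k, hk⟩
    by_cases hkm : k < m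
    · exact (hrow k hkm).2 (hr k hkm)
    · obtain rfl : k = m := by omega
      exact (hlast (hr 0 (by omega))).2 hl

theorem dSKP_swap (m : ℕ) (a b : ℂ) (x y : ℕ → ℂ) (s : ℕ) :
    dSKP m b a y x s = -dSKP m a b x y s := by
  have : ∑ r ∈ Finset.range m, (if s ≤ r then 1 else b * a) * (y r - x r)
          * (∏ t ∈ Finset.range r, y t) * ∏ t ∈ Finset.range r, x t
      = - ∑ r ∈ Finset.range m, (if s ≤ r then 1 else a * b) * (x r - y r)
          * (∏ t ∈ Finset.range r, x t) * ∏ t ∈ Finset.range r, y t := by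
    rw [← Finset.sum_neg_distrib]
    refine Finset.sum_congr rfl fun r _ => ?_
    rw [mul_comm b a]
    ring
  unfold dSKP
  rw [this]
  ring

theorem dSKP_succ (m : ℕ) (a b : ℂ) (x y : ℕ → ℂ) (s : ℕ) (hs : s < m) :
    dSKP m a b x y (s + 1) = dSKP m a b x y s - (1 - a * b) * (x s - y s)
      * ((∏ t ∈ Finset.range s, x t) * ∏ t ∈ Finset.range s, y t) := by
  rw [eq_sub_iff_add_eq', ← eq_sub_iff_add_eq]
  unfold dSKP
  rw [add_sub_add_left_eq_sub, ← Finset.sum_sub_distrib, Finset.sum_eq_single s]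
  · simp
    ring
  · intro r _ hr
    by_cases h : s ≤ r
    · have : s + 1 ≤ r := by omega
      simp [h, this]
    · have : ¬ (s + 1 ≤ r) := by omega
      simp [h, this]
  · intro h
    exact absurd (Finset.mem_range.2 hs) h

theorem dSKP_ends (m : ℕ) (a b : ℂ) (x y : ℕ → ℂ) : ∃ S : ℂ,
    dSKP m a b x y 0 = a * (∏ r ∈ Finset.range m, y r) - b * (∏ r ∈ Finset.range m, x r) + S ∧
    dSKP m a b x y m
      = a * (∏ r ∈ Finset.range m, y r) - b * (∏ r ∈ Finset.range m, x r) + a * b * S := by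
  refine ⟨∑ r ∈ Finset.range m, (x r - y r)
          * (∏ t ∈ Finset.range r, x t) * ∏ t ∈ Finset.range r, y t, ?_, ?_⟩
  · simp [dSKP]
  · unfold dSKP
    rw [Finset.mul_sum]
    congr 1
    refine Finset.sum_congr rfl fun r hr => ?_
    have : ¬ m ≤ r := by simpa using hr
    simp only [this, if_false]
    ring

theorem dSK_prod_new (m : ℕ) (P x z : ℕ → ℂ) (hP : ∀ s, s ≤ m → P s ≠ 0)
    (hx : ∀ s, s < m → x s ≠ 0) (hz : ∀ s, s < m → z s = P (s + 1) / (x s * P s)) :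
    ∀ n, n ≤ m → (∏ s ∈ Finset.range n, z s) * ((∏ s ∈ Finset.range n, x s) * P 0) = P n := by
  intro n
  induction n with
  | zero => simp
  | succ n ih =>
    intro hn
    have h := ih (by omega)
    have h1 := hP n (by omega)
    have h2 := hx n (by omega)
    rw [Finset.prod_range_succ, Finset.prod_range_succ, hz n (by omega)]
    field_simp
    linear_combination P (n + 1) * h

/-- One half of the compatibility: the fourth vertex `χ` is related to `ψ = F[x] φ`. -/
theorem dSK_half (m : ℕ) (a b lam : ℂ) (x y y' : ℕ → ℂ)
    (hx0 : ∀ s, s < m → x s ≠ 0)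
    (hP : ∀ s, s ≤ m → dSKP m a b x y s ≠ 0)
    (hy' : ∀ s, s < m → y' s = dSKP m a b x y (s + 1) / (x s * dSKP m a b x y s))
    (p q r : Fin (m + 1) → ℂ)
    (hq : dSKRel m x a lam p q) (hr : dSKRel m y b lam p r) :
    dSKRel m y' b lam q (fun k => p k + (1 - a * b) * ((∏ t ∈ Finset.range k, x t)
      * ∏ t ∈ Finset.range k, y t) / dSKP m a b x y k * (q k - r k)) := by
  obtain ⟨hq1, hq2⟩ := hq
  obtain ⟨hr1, hr2⟩ := hr
  refine ⟨fun k hk => ?_, ?_⟩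
  · have e1 := hq1 k hk
    have e2 := hr1 k hk
    have h1 := hP k (by omega)
    have h2 := hP (k + 1) (by omega)
    have h3 := dSKP_succ m a b x y k hk
    have h4 := hx0 k hk
    rw [hy' k hk]
    simp only [Finset.prod_range_succ]
    generalize (∏ t ∈ Finset.range k, x t) = X at *
    generalize (∏ t ∈ Finset.range k, y t) = Y at *
    generalize dSKP m a b x y k = P at *
    generalize dSKP m a b x y (k + 1) = P1 at *
    have e3 : q ⟨k, by omega⟩ = p ⟨k + 1, by omega⟩ - x k * (p ⟨k, by omega⟩ - q ⟨k + 1, by omega⟩) := by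
      linear_combination -e1
    have e4 : r ⟨k, by omega⟩ = p ⟨k + 1, by omega⟩ - y k * (p ⟨k, by omega⟩ - r ⟨k + 1, by omega⟩) := by
      linear_combination -e2
    rw [e3, e4]
    field_simp
    rw [h3]
    ring
  · obtain ⟨S, s0, sm⟩ := dSKP_ends m a b x y
    have h0 := hP 0 (by omega)
    have h1 := hP m le_rfl
    have hX : (∏ s ∈ Finset.range m, x s) ≠ 0 :=
      Finset.prod_ne_zero_iff.2 fun s hs => hx0 s (Finset.mem_range.1 hs)
    have hY := dSK_prod_new m (dSKP m a b x y) x y' hP hx0 hy' m le_rfl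
    have hY' : (∏ s ∈ Finset.range m, y' s)
        = dSKP m a b x y m / ((∏ s ∈ Finset.range m, x s) * dSKP m a b x y 0) := by
      rw [eq_div_iff (mul_ne_zero hX h0), hY]
    rw [hY']
    simp only [Finset.prod_range_zero]
    generalize (∏ t ∈ Finset.range m, x t) = X at *
    generalize (∏ t ∈ Finset.range m, y t) = Y at *
    generalize dSKP m a b x y 0 = P at *
    generalize dSKP m a b x y m = P1 at *
    field_simp
    rw [s0, sm]
    linear_combination (Y - b ^ 2 * X + b * S) * hq2 - (1 - a * b) * X * hr2

/-- Nonlinear superposition of Darboux transformations for the discretization of the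
Sawada–Kotera equation: the refactorization identity
`F[y', b, λ] F[x, a, λ] = F[x', a, λ] F[y, b, λ]` holds with
`x'_s = P_{s+1}/(y_s P_s)` and `y'_s = P'_{s+1}/(x_s P'_s)`. -/
theorem dSK_superposition_refactorization
    (m : ℕ) (hm : 1 ≤ m) (a b : ℂ) (hab : a ≠ b)
    (x y x' y' : ℕ → ℂ)
    (hx0 : ∀ s, s < m → x s ≠ 0) (hy0 : ∀ s, s < m → y s ≠ 0)
    (hP : ∀ s, s ≤ m → dSKP m a b x y s ≠ 0)
    (hP' : ∀ s, s ≤ m → dSKP m b a y x s ≠ 0)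
    (hx' : ∀ s, s < m → x' s = dSKP m a b x y (s + 1) / (y s * dSKP m a b x y s))
    (hy' : ∀ s, s < m → y' s = dSKP m b a y x (s + 1) / (x s * dSKP m b a y x s))
    (hgx : (∏ s ∈ Finset.range (m - 1), x (s + 1)) - a ≠ 0)
    (hgy : (∏ s ∈ Finset.range (m - 1), y (s + 1)) - b ≠ 0)
    (hgx' : (∏ s ∈ Finset.range (m - 1), x' (s + 1)) - a ≠ 0)
    (hgy' : (∏ s ∈ Finset.range (m - 1), y' (s + 1)) - b ≠ 0) :
    ∀ lam : ℂ, lam ≠ 0 →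
      IsUnit (dSKB m x a lam).det → IsUnit (dSKB m y b lam).det →
      IsUnit (dSKB m x' a lam).det → IsUnit (dSKB m y' b lam).det →
      dSKF m y' b lam * dSKF m x a lam = dSKF m x' a lam * dSKF m y b lam := by
  intro lam _ hBx hBy hBx' hBy'
  have hy'2 : ∀ s, s < m → y' s = dSKP m a b x y (s + 1) / (x s * dSKP m a b x y s) := by
    intro s hs
    rw [hy' s hs, dSKP_swap m a b, dSKP_swap m a b, mul_neg, neg_div_neg_eq]
  have hx'2 : ∀ s, s < m → x' s = dSKP m b a y x (s + 1) / (y s * dSKP m b a y x s) := by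
    intro s hs
    rw [hx' s hs, dSKP_swap m a b x y, dSKP_swap m a b x y, mul_neg, neg_div_neg_eq]
  have h0 : 0 < m := hm
  have hx'0 : x' 0 ≠ 0 := by
    rw [hx' 0 h0]
    exact div_ne_zero (hP 1 hm) (mul_ne_zero (hy0 0 h0) (hP 0 (by omega)))
  have hy'0 : y' 0 ≠ 0 := by
    rw [hy' 0 h0]
    exact div_ne_zero (hP' 1 hm) (mul_ne_zero (hx0 0 h0) (hP' 0 (by omega)))
  refine Matrix.mulVec_injective (funext fun p => ?_)
  rw [← Matrix.mulVec_mulVec, ← Matrix.mulVec_mulVec]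
  have hq := (dSK_eq_iff m hm x a lam (hx0 0 h0) hgx hBx p _).1 rfl
  have hr := (dSK_eq_iff m hm y b lam (hy0 0 h0) hgy hBy p _).1 rfl
  have c1 := dSK_half m a b lam x y y' hx0 hP hy'2 p _ _ hq hr
  have c2 := dSK_half m b a lam y x x' hy0 hP' hx'2 p _ _ hr hq
  rw [← dSK_eq_iff m hm y' b lam hy'0 hgy' hBy'] at c1
  rw [← dSK_eq_iff m hm x' a lam hx'0 hgx' hBx'] at c2
  rw [← c1, ← c2]
  funext k
  rw [dSKP_swap m a b, mul_comm b a, div_neg]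
  ring
end
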